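/- For every a ∈ Ω, the function ψ_a : ℝ^d → ℝ is continuous. -/

import Mathlib

/-!
If `ε • a + (y - x) ∈ P`, then adding this vector to `x - t • a ∈ A` gives `y - (t - ε) • a ∈ A`,
so `ψ_a x ≤ ψ_a y + ε`. Since `ε • a` is an interior point of the cone `P`, the membership holds for
all `y` near `x`, with `x` and `y` in either order. The supremum is finite because an interior point
of a cone absorbs every vector, which compares `x` with a point of `A` and with a point outside `A`.
-/

open Filter Set Topology
open scoped Pointwise

/-- The set of all `t` for which moving `x` back by `t • a` lands in `A`. Its supremum is `ψ_a x`
once it is nonempty and bounded above; otherwise `sSup` returns the junk value `0`. -/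
def shiftSet {E : Type*} [AddCommGroup E] [Module ℝ E] (A : Set E) (a x : E) : Set ℝ :=
  {t : ℝ | x - t • a ∈ A}

section Cone

variable {E : Type*} [AddCommGroup E] [Module ℝ E] [TopologicalSpace E] {P : Set E} {a : E}

theorem smul_mem_interior_of_cone [ContinuousConstSMul ℝ E]
    (hP : ∀ c : ℝ, 0 < c → ∀ x ∈ P, c • x ∈ P) (ha : a ∈ interior P) {c : ℝ} (hc : 0 < c) :
    c • a ∈ interior P := by
  have hsub : c • P ⊆ P := smul_set_subset_iff.2 fun x hx => hP c hc x hx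
  apply interior_mono hsub
  rw [interior_smul₀ hc.ne']
  exact smul_mem_smul_set ha

theorem exists_smul_add_mem_of_cone [ContinuousAdd E] [ContinuousSMul ℝ E]
    (hP : ∀ c : ℝ, 0 < c → ∀ x ∈ P, c • x ∈ P) (ha : a ∈ interior P) (v : E) :
    ∃ s : ℝ, s • a + v ∈ P := by
  have hlim : Tendsto (fun c : ℝ => a + c • v) (𝓝[>] 0) (𝓝 a) := by
    have hcont : Continuous fun c : ℝ => a + c • v := by fun_prop
    exact (hcont.tendsto' 0 a (by simp)).mono_left nhdsWithin_le_nhds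
  obtain ⟨c, hcP, hc⟩ :=
    ((hlim.eventually (mem_interior_iff_mem_nhds.1 ha)).and self_mem_nhdsWithin).exists
  refine ⟨c⁻¹, ?_⟩
  simpa only [smul_add, inv_smul_smul₀ (ne_of_gt hc)] using hP c⁻¹ (inv_pos.2 hc) _ hcP

theorem eventually_smul_add_sub_mem_of_cone [IsTopologicalAddGroup E] [ContinuousConstSMul ℝ E]
    (hP : ∀ c : ℝ, 0 < c → ∀ x ∈ P, c • x ∈ P) (ha : a ∈ interior P) {ε : ℝ} (hε : 0 < ε) (x : E) :
    ∀ᶠ y in 𝓝 x, ε • a + (y - x) ∈ P ∧ ε • a + (x - y) ∈ P := by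
  have hnhds : P ∈ 𝓝 (ε • a) :=
    mem_interior_iff_mem_nhds.1 (smul_mem_interior_of_cone hP ha hε)
  have hfwd : Continuous fun y => ε • a + (y - x) := by fun_prop
  have hbwd : Continuous fun y => ε • a + (x - y) := by fun_prop
  exact ((hfwd.tendsto' x (ε • a) (by simp)).eventually hnhds).and
    ((hbwd.tendsto' x (ε • a) (by simp)).eventually hnhds)

end Cone

section ShiftSet

variable {E : Type*} [AddCommGroup E] [Module ℝ E] {P A : Set E} {a x y : E}

theorem sub_mem_shiftSet (hA : ∀ x ∈ A, ∀ p ∈ P, x + p ∈ A) {s t : ℝ}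
    (hs : s • a + (y - x) ∈ P) (ht : t ∈ shiftSet A a x) : t - s ∈ shiftSet A a y := by
  change y - (t - s) • a ∈ A
  have heq : y - (t - s) • a = x - t • a + (s • a + (y - x)) := by module
  rw [heq]
  exact hA _ ht _ hs

theorem sSup_shiftSet_le_add (hA : ∀ x ∈ A, ∀ p ∈ P, x + p ∈ A)
    (hne : (shiftSet A a x).Nonempty) (hbdd : BddAbove (shiftSet A a y)) {ε : ℝ}
    (hε : ε • a + (y - x) ∈ P) :
    sSup (shiftSet A a x) ≤ sSup (shiftSet A a y) + ε :=
  csSup_le hne fun _ ht => sub_le_iff_le_add.1 (le_csSup hbdd (sub_mem_shiftSet hA hε ht))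

variable [TopologicalSpace E] [ContinuousAdd E] [ContinuousSMul ℝ E]

theorem shiftSet_nonempty (hP : ∀ c : ℝ, 0 < c → ∀ x ∈ P, c • x ∈ P)
    (hA : ∀ x ∈ A, ∀ p ∈ P, x + p ∈ A) (hAne : A.Nonempty) (ha : a ∈ interior P) (x : E) :
    (shiftSet A a x).Nonempty := by
  obtain ⟨z, hz⟩ := hAne
  obtain ⟨s, hs⟩ := exists_smul_add_mem_of_cone hP ha (x - z)
  have hzero : (0 : ℝ) ∈ shiftSet A a z := by simpa [shiftSet] using hz
  exact ⟨0 - s, sub_mem_shiftSet hA hs hzero⟩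

theorem bddAbove_shiftSet (hP : ∀ c : ℝ, 0 < c → ∀ x ∈ P, c • x ∈ P)
    (hA : ∀ x ∈ A, ∀ p ∈ P, x + p ∈ A) (hAproper : A ≠ univ) (ha : a ∈ interior P) (x : E) :
    BddAbove (shiftSet A a x) := by
  obtain ⟨w, hw⟩ := (ne_univ_iff_exists_notMem A).1 hAproper
  obtain ⟨s, hs⟩ := exists_smul_add_mem_of_cone hP ha (w - x)
  refine ⟨s, fun t ht => le_of_not_gt fun hst => hw ?_⟩
  have hshift : w - (t - s) • a ∈ A := sub_mem_shiftSet hA hs ht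
  have hpos : (t - s) • a ∈ P := hP _ (sub_pos.2 hst) a (interior_subset ha)
  simpa only [sub_add_cancel] using hA _ hshift _ hpos

end ShiftSet

theorem stmt_4_general {E : Type*} [AddCommGroup E] [Module ℝ E] [TopologicalSpace E]
    [IsTopologicalAddGroup E] [ContinuousSMul ℝ E] {P A : Set E}
    (hP : ∀ c : ℝ, 0 < c → ∀ x ∈ P, c • x ∈ P) (hA : ∀ x ∈ A, ∀ p ∈ P, x + p ∈ A)
    (hAne : A.Nonempty) (hAproper : A ≠ univ) {a : E} (ha : a ∈ interior P) :
    Continuous fun x : E => sSup {t : ℝ | x - t • a ∈ A} := by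
  change Continuous fun x : E => sSup (shiftSet A a x)
  have hne := shiftSet_nonempty hP hA hAne ha
  have hbdd := bddAbove_shiftSet hP hA hAproper ha
  refine Metric.continuous_iff'.2 fun x ε hε => ?_
  filter_upwards [eventually_smul_add_sub_mem_of_cone hP ha (half_pos hε) x] with y ⟨hxy, hyx⟩
  have hle : sSup (shiftSet A a x) ≤ sSup (shiftSet A a y) + ε / 2 :=
    sSup_shiftSet_le_add hA (hne x) (hbdd y) hxy
  have hge : sSup (shiftSet A a y) ≤ sSup (shiftSet A a x) + ε / 2 :=
    sSup_shiftSet_le_add hA (hne y) (hbdd x) hyx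
  rw [Real.dist_eq, abs_lt]
  constructor <;> linarith

theorem stmt_4 {d : ℕ} (P A : Set (EuclideanSpace ℝ (Fin d)))
    (hPclosed : IsClosed P) (hPconvex : Convex ℝ P)
    (hPcone : ∀ c : ℝ, 0 ≤ c → ∀ x ∈ P, c • x ∈ P)
    (hPspan : Submodule.span ℝ P = ⊤)
    (hPline : ∀ x ∈ P, -x ∈ P → x = 0)
    (hAne : A.Nonempty) (hAclosed : IsClosed A)
    (hAmod : ∀ x ∈ A, ∀ p ∈ P, x + p ∈ A)
    (hAproper : A ≠ Set.univ)
    (a : EuclideanSpace ℝ (Fin d)) (ha : a ∈ interior P) :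
    Continuous (fun x : EuclideanSpace ℝ (Fin d) => sSup {t : ℝ | x - t • a ∈ A}) :=
  stmt_4_general (fun c hc => hPcone c hc.le) hAmod hAne hAproper ha
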